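/- Let δ > 0, α > 1, R ≥ R₀ > √(δ/(α−1)), and k > 0 with k < 8δ/(α − 1 − δ/R_T²)², where R_T ≥ R. Define g : ℝ^J_per → ℝ^J_per by g(F) = 2F − 2V + k·L_h F − (k·v_c/(6h))·(1/R²)·φ(F,F), where L_h F_i = (δ/R⁴)Δ_h²F_i + (1/R²)(α−1+δ/R²)Δ_hF_i + ((α−1)/R²)F_i. Then for every J-periodic V there exists a J-periodic F* with g(F*) = 0. -/

import Mathlib

/-- Discrete Laplacian. -/
noncomputable def dlap (h : ℝ) (V : ℤ → ℝ) (i : ℤ) : ℝ :=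
  (V (i - 1) - 2 * V i + V (i + 1)) / h ^ 2

/-- Nonlinear term φ. -/
def dphi (V W : ℤ → ℝ) (i : ℤ) : ℝ :=
  (V (i - 1) + V i + V (i + 1)) * (W (i + 1) - W (i - 1))

/-!
Summation by parts turns the inner product of `L_h F` with `F` into a quadratic form in the pair
`(Δ_h F, F)`, and `φ(F, F)` is orthogonal to `F` because `φ(F, F) F` telescopes. Completing the
square, the quadratic form is bounded below, and the bound on `k` yields the discriminant condition
that makes `g` coercive. A continuous coercive map on a Euclidean space has a zero: it
points outwards on a large sphere, so without a zero it would yield a smooth retraction of the ball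
onto the sphere.

No such retraction exists, by an argument of Milnor and Rogers. If `v` is `C¹` and vanishes on the
boundary of a compact set `C`, then `x ↦ x + t v(x)` permutes the interior of `C` for small `t`. So
the integral over it of the polynomial `det (1 + t Dv)` equals the volume of that interior for
small `t`, hence for all `t`. For `v = r - id` with `r` a retraction, the integrand at `t = 1` is
`det Dr`, which vanishes because the boundary of `C`, where `r` takes its values, has empty
interior.
-/

open MeasureTheory Metric Set
open scoped NNReal Polynomial Topology

section NoRetraction

lemma integral_eval_eq_of_infinite {X : Type*} [MeasurableSpace X] {μ : Measure X}
    {p : X → ℝ[X]} {n : ℕ} (hdeg : ∀ x, (p x).natDegree ≤ n)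
    (hint : ∀ t, Integrable (fun x => (p x).eval t) μ) {T : Set ℝ} (hT : T.Infinite) {c : ℝ}
    (hc : ∀ t ∈ T, ∫ x, (p x).eval t ∂μ = c) (a : ℝ) : ∫ x, (p x).eval a ∂μ = c := by
  obtain ⟨s, hsT, hcard⟩ := hT.exists_subset_card_eq (n + 1)
  let w : ℝ → ℝ := fun t => (Lagrange.basis s id t).eval a
  have eval_eq_sum {q : ℝ[X]} (hq : q.natDegree ≤ n) : q.eval a = ∑ t ∈ s, q.eval t * w t := by
    have hlt : q.degree < s.card := by
      rw [hcard]
      exact (Polynomial.degree_le_of_natDegree_le hq).trans_lt (mod_cast n.lt_succ_self)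
    conv_lhs => rw [Lagrange.eq_interpolate Function.injective_id.injOn hlt]
    simp [Lagrange.interpolate_apply, Polynomial.eval_finsetSum, w]
  have sum_w : ∑ t ∈ s, w t = 1 := by simpa using (eval_eq_sum (q := 1) (by simp)).symm
  calc ∫ x, (p x).eval a ∂μ = ∫ x, ∑ t ∈ s, (p x).eval t * w t ∂μ := by
        simp only [fun x => eval_eq_sum (hdeg x)]
    _ = ∑ t ∈ s, (∫ x, (p x).eval t ∂μ) * w t := by
        rw [integral_finsetSum _ fun t _ => (hint t).mul_const (w t)]
        simp only [integral_mul_const]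
    _ = ∑ t ∈ s, c * w t := Finset.sum_congr rfl fun t ht => by rw [hc t (hsT ht)]
    _ = c := by rw [← Finset.mul_sum, sum_w, mul_one]

lemma exists_polynomial_eval_eq_det_one_add_smul {K M : Type*} [Field K] [AddCommGroup M]
    [Module K M] [FiniteDimensional K M] (f : M →ₗ[K] M) :
    ∃ p : K[X], p.natDegree ≤ Module.finrank K M ∧
      ∀ t : K, p.eval t = LinearMap.det (1 + t • f) := by
  let b := Module.finBasis K M
  let A := LinearMap.toMatrix b b f
  refine ⟨((Polynomial.X : K[X]) • A.map Polynomial.C +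
      (1 : Matrix _ _ K).map Polynomial.C).det, ?_, fun t => ?_⟩
  · simpa using Polynomial.natDegree_det_X_add_C_le A 1
  · rw [← LinearMap.det_toMatrix b, map_add, map_smul, LinearMap.toMatrix_one,
      ← Polynomial.coe_evalRingHom, RingHom.map_det]
    congr 1
    ext i j
    by_cases hij : i = j <;> simp [A, hij, mul_comm t, add_comm (1 : K)]

lemma nonempty_inter_frontier_of_isPreconnected {X : Type*} [TopologicalSpace X] {s t : Set X}
    (ht : IsPreconnected t) (hs : (t ∩ s).Nonempty) (hsc : (t ∩ sᶜ).Nonempty) :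
    (t ∩ frontier s).Nonempty := by
  by_contra hempty
  have mem_or {x : X} (hx : x ∈ t) : x ∈ interior s ∨ x ∈ (closure s)ᶜ := by
    by_contra! h
    exact hempty ⟨x, hx, not_not.1 h.2, h.1⟩
  obtain ⟨x, hxt, hxs⟩ := hs
  obtain ⟨y, hyt, hys⟩ := hsc
  obtain ⟨z, -, hz, hz'⟩ := ht _ _ isOpen_interior isClosed_closure.isOpen_compl
    (fun _ => mem_or)
    ⟨x, hxt, (mem_or hxt).resolve_right (not_not.2 (subset_closure hxs))⟩
    ⟨y, hyt, (mem_or hyt).resolve_left fun h => hys (interior_subset h)⟩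
  exact hz' (interior_subset_closure hz)

lemma lipschitzWith_indicator_of_frontier {E F : Type*} [SeminormedAddCommGroup E]
    [NormedSpace ℝ E] [PseudoMetricSpace F] [Zero F] {v : E → F} {s : Set E} {K : ℝ≥0}
    (hs : IsClosed s) (hv : LipschitzOnWith K v s) (hv0 : ∀ x ∈ frontier s, v x = 0) :
    LipschitzWith K (s.indicator v) := by
  have dist_zero_le {x y : E} (hx : x ∈ s) (hy : y ∉ s) : dist (v x) 0 ≤ K * dist x y := by
    obtain ⟨z, hzxy, hz⟩ := nonempty_inter_frontier_of_isPreconnected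
      (convex_segment x y).isPreconnected
      ⟨x, left_mem_segment ℝ x y, hx⟩ ⟨y, right_mem_segment ℝ x y, hy⟩
    have hxz := hv.dist_le_mul x hx z (hs.frontier_subset hz)
    rw [hv0 z hz] at hxz
    refine hxz.trans (mul_le_mul_of_nonneg_left ?_ K.coe_nonneg)
    linarith [dist_add_dist_of_mem_segment hzxy, dist_nonneg (x := z) (y := y)]
  refine LipschitzWith.of_dist_le_mul fun x y => ?_
  by_cases hx : x ∈ s <;> by_cases hy : y ∈ s <;> simp only [indicator, hx, hy, if_true, if_false]
  · exact hv.dist_le_mul x hx y hy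
  · exact dist_zero_le hx hy
  · rw [dist_comm, dist_comm x]
    exact dist_zero_le hy hx
  · rw [dist_self]
    positivity

lemma bijective_add_of_lipschitzWith {E : Type*} [NormedAddCommGroup E] [CompleteSpace E]
    {u : E → E} {K : ℝ≥0} (hK : K < 1) (hu : LipschitzWith K u) :
    Function.Bijective fun x => x + u x := by
  refine ⟨(AntilipschitzWith.id.add_lipschitzWith hu (by simpa using hK)).injective, fun y => ?_⟩
  have hcontr : ContractingWith K fun x => y - u x :=
    ⟨hK, by simpa using (LipschitzWith.const y).sub hu⟩
  exact ⟨hcontr.fixedPoint, eq_sub_iff_add_eq.1 hcontr.fixedPoint_isFixedPt.symm⟩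

lemma bijOn_add_of_lipschitzWith {E : Type*} [NormedAddCommGroup E] [CompleteSpace E]
    {u : E → E} {K : ℝ≥0} (hK : K < 1) (hu : LipschitzWith K u) {s : Set E}
    (hu0 : ∀ x ∉ s, u x = 0) : BijOn (fun x => x + u x) s s := by
  have hbij := bijective_add_of_lipschitzWith hK hu
  have himage : (fun x => x + u x) '' sᶜ = sᶜ :=
    (image_congr fun x hx => by rw [hu0 x hx, add_zero]).trans (image_id' _)
  rw [image_compl_eq hbij, compl_inj_iff] at himage
  simpa only [himage] using hbij.1.injOn.bijOn_image (s := s)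

lemma eventually_forall_det_one_add_smul_pos {E X : Type*} [NormedAddCommGroup E]
    [NormedSpace ℝ E] [TopologicalSpace X] {A : X → E →L[ℝ] E} (hA : Continuous A)
    {C : Set X} (hC : IsCompact C) :
    ∀ᶠ t : ℝ in 𝓝 0, ∀ x ∈ C, 0 < (1 + t • A x).det := by
  refine hC.eventually_forall_of_forall_eventually fun x _ => ?_
  have hcont : Continuous fun z : ℝ × X => (1 + z.1 • A z.2).det :=
    ContinuousLinearMap.continuous_det.comp (by fun_prop)
  exact hcont.continuousAt.eventually_const_lt (by simp [ContinuousLinearMap.det])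

variable {E : Type*} [NormedAddCommGroup E] [NormedSpace ℝ E] [FiniteDimensional ℝ E]
  {C : Set E} {v : E → E}

lemma eventually_bijOn_add_smul_interior (hC : IsCompact C) (hv : ContDiff ℝ 1 v)
    (hv0 : ∀ x ∈ frontier C, v x = 0) :
    ∀ᶠ t : ℝ in 𝓝 0, BijOn (fun x => x + t • v x) (interior C) (interior C) := by
  obtain ⟨K, hK⟩ := hv.locallyLipschitz.locallyLipschitzOn.exists_lipschitzOnWith_of_compact hC
  have hlip : LipschitzWith K (C.indicator v) :=
    lipschitzWith_indicator_of_frontier hC.isClosed hK hv0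
  have hsmall : ∀ᶠ t : ℝ in 𝓝 0, ‖t‖₊ * K < 1 := by
    refine Filter.Tendsto.eventually_lt_const (v := 0) zero_lt_one ?_
    exact Continuous.tendsto' (by fun_prop) _ _ (by simp)
  filter_upwards [hsmall] with t ht
  have hu0 : ∀ x ∉ interior C, t • C.indicator v x = 0 := fun x hx => by
    by_cases hxC : x ∈ C
    · rw [indicator_of_mem hxC, hv0 x ⟨subset_closure hxC, hx⟩, smul_zero]
    · rw [indicator_of_notMem hxC, smul_zero]
  refine (bijOn_add_of_lipschitzWith ht ((lipschitzWith_smul t).comp hlip) hu0).congr fun x hx => ?_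
  simp only [Function.comp_apply, indicator_of_mem (interior_subset hx)]

section Volume

variable [MeasurableSpace E] [BorelSpace E] (μ : Measure E) [μ.IsAddHaarMeasure]

lemma eventually_setIntegral_det_one_add_smul_fderiv (hC : IsCompact C) (hv : ContDiff ℝ 1 v)
    (hv0 : ∀ x ∈ frontier C, v x = 0) :
    ∀ᶠ t : ℝ in 𝓝 0,
      ∫ x in interior C, (1 + t • fderiv ℝ v x).det ∂μ = μ.real (interior C) := by
  filter_upwards [eventually_bijOn_add_smul_interior hC hv hv0,
    eventually_forall_det_one_add_smul_pos (hv.continuous_fderiv one_ne_zero) hC]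
    with t hbij hdet
  have hderiv : ∀ x ∈ interior C, HasFDerivWithinAt (fun x => x + t • v x)
      (1 + t • fderiv ℝ v x) (interior C) x := fun x _ =>
    ((hasFDerivAt_id x).add
      ((hv.differentiable one_ne_zero x).hasFDerivAt.const_smul t)).hasFDerivWithinAt
  calc ∫ x in interior C, (1 + t • fderiv ℝ v x).det ∂μ
      = ∫ x in interior C, |(1 + t • fderiv ℝ v x).det| • (1 : ℝ) ∂μ :=
        setIntegral_congr_fun isOpen_interior.measurableSet fun x hx => by
          simp only [abs_of_pos (hdet x (interior_subset hx)), smul_eq_mul, mul_one]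
    _ = ∫ _ in (fun x => x + t • v x) '' interior C, (1 : ℝ) ∂μ :=
        (integral_image_eq_integral_abs_det_fderiv_smul μ isOpen_interior.measurableSet hderiv
          hbij.injOn fun _ => 1).symm
    _ = μ.real (interior C) := by simp [hbij.image_eq]

theorem setIntegral_det_one_add_fderiv (hC : IsCompact C) (hv : ContDiff ℝ 1 v)
    (hv0 : ∀ x ∈ frontier C, v x = 0) :
    ∫ x in interior C, (1 + fderiv ℝ v x).det ∂μ = μ.real (interior C) := by
  choose p hdeg hp using fun x => exists_polynomial_eval_eq_det_one_add_smul
    (fderiv ℝ v x : E →ₗ[ℝ] E)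
  replace hp : ∀ x t, (p x).eval t = (1 + t • fderiv ℝ v x).det := hp
  have hint (t : ℝ) : IntegrableOn (fun x => (p x).eval t) (interior C) μ := by
    have hdet : Continuous fun x => (p x).eval t := by
      simp only [hp]
      exact ContinuousLinearMap.continuous_det.comp <|
        continuous_const.add ((hv.continuous_fderiv one_ne_zero).const_smul t)
    exact (hdet.continuousOn.integrableOn_compact hC).mono_set interior_subset
  have hinf := infinite_of_mem_nhds (0 : ℝ)
    (eventually_setIntegral_det_one_add_smul_fderiv μ hC hv hv0)
  simpa [hp] using integral_eval_eq_of_infinite hdeg hint hinf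
    (fun t ht => by simpa only [hp] using ht.out) 1

end Volume

theorem not_mapsTo_interior_frontier_of_contDiff (hC : IsCompact C) (hne : (interior C).Nonempty)
    {r : E → E} (hr : ContDiff ℝ 1 r) (hfix : ∀ x ∈ frontier C, r x = x) :
    ¬ MapsTo r (interior C) (frontier C) := by
  intro hmaps
  borelize E
  have hdet : ∀ x ∈ interior C, (fderiv ℝ r x).det = 0 := fun x hx => by
    by_contra hdet_ne
    have hopen : Filter.map r (𝓝 x) = 𝓝 (r x) :=
      (hr.hasStrictFDerivAt one_ne_zero).map_nhds_eq_of_surj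
        (LinearMap.range_eq_top.2 (LinearMap.equivOfDetNeZero _ hdet_ne).surjective)
    have hmem : r x ∈ interior (frontier C) := mem_interior_iff_mem_nhds.2 <|
      hopen ▸ Filter.mem_map.2 (Filter.mem_of_superset (isOpen_interior.mem_nhds hx) hmaps)
    simp [interior_frontier hC.isClosed] at hmem
  have hfderiv (x : E) : 1 + fderiv ℝ (fun x => r x - x) x = fderiv ℝ r x := by
    rw [fderiv_fun_sub (hr.differentiable one_ne_zero x) differentiableAt_fun_id, fderiv_fun_id]
    exact add_sub_cancel _ _
  have hvol := setIntegral_det_one_add_fderiv Measure.addHaar hC (hr.sub contDiff_fun_id)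
    fun x hx => sub_eq_zero.2 (hfix x hx)
  simp only [hfderiv] at hvol
  rw [setIntegral_congr_fun isOpen_interior.measurableSet hdet, integral_zero] at hvol
  have hpos := isOpen_interior.measure_pos (Measure.addHaar (G := E)) hne
  have hfin : Measure.addHaar (interior C) ≠ ⊤ :=
    ((measure_mono interior_subset).trans_lt hC.measure_lt_top).ne
  exact (ENNReal.toReal_pos hpos.ne' hfin).ne hvol

end NoRetraction

section ZerosOfVectorFields

/-- The radial retraction onto the closed ball of radius `ρ` about `0`, written without a case
distinction so that its continuity is evident. -/
noncomputable def radialProj {E : Type*} [NormedAddCommGroup E] [NormedSpace ℝ E] (ρ : ℝ)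
    (x : E) : E :=
  (ρ / max ρ ‖x‖) • x

section RadialProj

variable {E : Type*} [NormedAddCommGroup E] [NormedSpace ℝ E] {ρ : ℝ} {x : E}

lemma continuous_radialProj (hρ : 0 < ρ) : Continuous (radialProj ρ : E → E) :=
  (continuous_const.div (continuous_const.max continuous_norm)
    fun _ => (lt_max_of_lt_left hρ).ne').smul continuous_id

lemma radialProj_of_norm_le (hρ : 0 < ρ) (hx : ‖x‖ ≤ ρ) : radialProj ρ x = x := by
  rw [radialProj, max_eq_left hx, div_self hρ.ne', one_smul]

lemma radialProj_of_le_norm (hx : ρ ≤ ‖x‖) : radialProj ρ x = (ρ / ‖x‖) • x := by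
  rw [radialProj, max_eq_right hx]

lemma radialProj_mem_sphere (hρ : 0 < ρ) (hx : ρ ≤ ‖x‖) : radialProj ρ x ∈ sphere 0 ρ := by
  rw [radialProj_of_le_norm hx, mem_sphere_zero_iff_norm, norm_smul, norm_div, norm_norm,
    div_mul_cancel₀ _ (hρ.trans_le hx).ne', Real.norm_of_nonneg hρ.le]

lemma radialProj_mem_closedBall (hρ : 0 < ρ) (x : E) : radialProj ρ x ∈ closedBall 0 ρ := by
  rcases le_total ‖x‖ ρ with hx | hx
  · rwa [radialProj_of_norm_le hρ hx, mem_closedBall_zero_iff]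
  · exact sphere_subset_closedBall (radialProj_mem_sphere hρ hx)

end RadialProj

variable {E : Type*} [NormedAddCommGroup E] [InnerProductSpace ℝ E] [FiniteDimensional ℝ E]

theorem exists_eq_zero_of_eq_self_of_le_norm {f : E → E} (hf : Continuous f) {ρ : ℝ}
    (hfρ : ∀ x, ρ ≤ ‖x‖ → f x = x) : ∃ x, f x = 0 := by
  by_contra! hne
  let S := max ρ 0 + 1
  have hS : 0 < S := by positivity
  have hρS : ρ < S := (le_max_left ρ 0).trans_lt (lt_add_one _)
  obtain ⟨g, hg, hgf, hgS, -⟩ := hf.exists_contDiff_approx_and_eqOn 1 (ε := fun x => ‖f x‖)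
    hf.norm (fun x => norm_pos_iff.2 (hne x)) (S := {x | S ≤ ‖x‖}) (U := {x | ρ < ‖x‖})
    (isClosed_le continuous_const continuous_norm)
    ((isOpen_lt continuous_const continuous_norm).mem_nhdsSet.2 fun _ hx => hρS.trans_le hx)
    (contDiffOn_id.congr fun x hx => hfρ x (le_of_lt hx))
  have hg0 : ∀ x, g x ≠ 0 := fun x hx => (hgf x).ne (by rw [hx, dist_zero_left])
  have hfrontier : frontier (closedBall (0 : E) S) = sphere 0 S := frontier_closedBall 0 hS.ne'
  refine not_mapsTo_interior_frontier_of_contDiff (r := fun x => (S * ‖g x‖⁻¹) • g x)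
    (isCompact_closedBall (0 : E) S) ?_ ?_ ?_ ?_
  · exact ⟨0, ball_subset_interior_closedBall (mem_ball_self hS)⟩
  · exact (contDiff_const.mul ((hg.norm ℝ hg0).inv fun x => norm_ne_zero_iff.2 (hg0 x))).smul hg
  · intro x hx
    have hxS : ‖x‖ = S := by simpa [hfrontier] using hx
    simp only [hgS hxS.ge, hfρ x (hρS.le.trans hxS.ge), hxS, mul_inv_cancel₀ hS.ne', one_smul]
  · intro x _
    rw [hfrontier, mem_sphere_zero_iff_norm, norm_smul, norm_mul, norm_inv, norm_norm,
      inv_mul_cancel_right₀ (norm_ne_zero_iff.2 (hg0 x)), Real.norm_of_nonneg hS.le]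

theorem exists_mem_closedBall_eq_zero_of_inner_nonneg {g : E → E} {ρ : ℝ} (hρ : 0 < ρ)
    (hg : ContinuousOn g (closedBall 0 ρ)) (hpos : ∀ x ∈ sphere 0 ρ, 0 ≤ inner ℝ (g x) x) :
    ∃ x ∈ closedBall 0 ρ, g x = 0 := by
  -- `w` is `1` on the closed ball and `0` from `‖x‖ = 2 * ρ` on.
  let w : E → ℝ := fun x => max 0 (2 - max ρ ‖x‖ / ρ)
  have hw : Continuous w := by fun_prop
  have hgP : Continuous (g ∘ radialProj ρ) :=
    hg.comp_continuous (continuous_radialProj hρ) (radialProj_mem_closedBall hρ)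
  obtain ⟨x, hx⟩ := exists_eq_zero_of_eq_self_of_le_norm
    (f := fun x => w x • g (radialProj ρ x) + (1 - w x) • x) (ρ := 2 * ρ)
    ((hw.smul hgP).add ((continuous_const.sub hw).smul continuous_id)) fun x hx => by
      have hwx : w x = 0 := max_eq_left <| by
        rw [sub_nonpos, le_div_iff₀ hρ]
        exact hx.trans (le_max_right _ _)
      rw [hwx, zero_smul, sub_zero, one_smul, zero_add]
  rcases le_or_gt ‖x‖ ρ with hxρ | hxρ
  · have hwx : w x = 1 := by norm_num [w, max_eq_left hxρ, hρ.ne']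
    rw [hwx, radialProj_of_norm_le hρ hxρ, one_smul, sub_self, zero_smul, add_zero] at hx
    exact ⟨x, mem_closedBall_zero_iff.2 hxρ, hx⟩
  · exfalso
    have hinner : 0 ≤ inner ℝ (g (radialProj ρ x)) x := by
      have h := hpos _ (radialProj_mem_sphere hρ hxρ.le)
      rw [radialProj_of_le_norm hxρ.le, real_inner_smul_right, ← radialProj_of_le_norm hxρ.le] at h
      exact nonneg_of_mul_nonneg_right h (div_pos hρ (hρ.trans hxρ))
    have hw0 : 0 ≤ w x := le_max_left _ _
    have hw1 : w x < 1 := max_lt one_pos <| by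
      rw [max_eq_right hxρ.le]
      linarith [(one_lt_div hρ).2 hxρ]
    have hzero := congrArg (fun y => inner ℝ y x) hx
    simp only [inner_add_left, real_inner_smul_left, real_inner_self_eq_norm_sq,
      inner_zero_left] at hzero
    linarith [mul_nonneg hw0 hinner, mul_pos (sub_pos.2 hw1) (pow_pos (hρ.trans hxρ) 2)]

theorem exists_eq_zero_of_coercive {g : E → E} (hg : Continuous g) {κ c : ℝ} (hκ : 0 < κ)
    (hcoer : ∀ x, κ * ‖x‖ ^ 2 - c * ‖x‖ ≤ inner ℝ (g x) x) : ∃ x, g x = 0 := by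
  have hρ : 0 < |c| / κ + 1 := by positivity
  obtain ⟨x, -, hx⟩ := exists_mem_closedBall_eq_zero_of_inner_nonneg hρ hg.continuousOn
    fun x hx => by
      have hκx : κ * ‖x‖ = |c| + κ := by
        rw [mem_sphere_zero_iff_norm.1 hx]
        field_simp
      have := hcoer x
      nlinarith [norm_nonneg x, le_abs_self c]
  exact ⟨x, hx⟩

end ZerosOfVectorFields

section PeriodicSequences

variable {J : ℕ} {F G : ℤ → ℝ}

lemma sum_range_sub_eq_zero_of_periodic {M : Type*} [AddCommGroup M] {D : ℤ → M}
    (hD : Function.Periodic D J) : ∑ i ∈ Finset.range J, (D (i + 1) - D i) = 0 := by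
  simpa [hD.eq] using Finset.sum_range_sub (fun n : ℕ => D n) J

lemma periodic_dlap (h : ℝ) (hF : Function.Periodic F J) : Function.Periodic (dlap h F) J :=
  fun i => by simp only [dlap, hF i, hF.add_const 1 i, hF.sub_const 1 i]

lemma periodic_dphi (hF : Function.Periodic F J) (hG : Function.Periodic G J) :
    Function.Periodic (dphi F G) J :=
  fun i => by
    simp only [dphi, hF i, hF.add_const 1 i, hF.sub_const 1 i, hG.add_const 1 i, hG.sub_const 1 i]

lemma sum_dlap_mul (h : ℝ) (hF : Function.Periodic F J) (hG : Function.Periodic G J) :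
    ∑ i ∈ Finset.range J, dlap h F i * G i = ∑ i ∈ Finset.range J, F i * dlap h G i := by
  have hflux : Function.Periodic (fun i => (F i * G (i - 1) - F (i - 1) * G i) / h ^ 2) J :=
    fun i => by simp only [hF i, hG i, hF.sub_const 1 i, hG.sub_const 1 i]
  rw [← sub_eq_zero, ← Finset.sum_sub_distrib, ← sum_range_sub_eq_zero_of_periodic hflux]
  refine Finset.sum_congr rfl fun i _ => ?_
  simp only [dlap, add_sub_cancel_right]
  ring

lemma sum_dphi_self_mul_self (hF : Function.Periodic F J) :
    ∑ i ∈ Finset.range J, dphi F F i * F i = 0 := by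
  have hflux : Function.Periodic (fun i => F (i - 1) * F i * (F (i - 1) + F i)) J :=
    fun i => by simp only [hF i, hF.sub_const 1 i]
  rw [← sum_range_sub_eq_zero_of_periodic hflux]
  refine Finset.sum_congr rfl fun i _ => ?_
  simp only [dphi, add_sub_cancel_right]
  ring

/-- The fourth-order difference operator `a Δ_h² + b Δ_h + c`, with `Δ_h²` encoded as the iterated
discrete Laplacian; it is the linear part `L_h` of the scheme. -/
noncomputable def linearPart (h a b c : ℝ) (F : ℤ → ℝ) (i : ℤ) : ℝ :=
  a * dlap h (dlap h F) i + b * dlap h F i + c * F i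

/-- The map `g(F) = 2 F - 2 V + k L_h F - e φ(F, F)`, whose zeros are the midpoints `F` of one time
step of the scheme starting at `V`. -/
noncomputable def schemeMap (h k a b c e : ℝ) (V F : ℤ → ℝ) (i : ℤ) : ℝ :=
  2 * F i - 2 * V i + k * linearPart h a b c F i - e * dphi F F i

lemma periodic_schemeMap (h k a b c e : ℝ) {V : ℤ → ℝ} (hV : Function.Periodic V J)
    (hF : Function.Periodic F J) : Function.Periodic (schemeMap h k a b c e V F) J :=
  fun i => by
    simp only [schemeMap, linearPart, hF i, hV i, periodic_dlap h hF i,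
      periodic_dlap h (periodic_dlap h hF) i, periodic_dphi hF hF i]

lemma le_sum_linearPart_mul_self (h : ℝ) {a : ℝ} (ha : 0 < a) (b c : ℝ)
    (hF : Function.Periodic F J) :
    (c - b ^ 2 / (4 * a)) * ∑ i ∈ Finset.range J, F i ^ 2 ≤
      ∑ i ∈ Finset.range J, linearPart h a b c F i * F i := by
  have hbilap := sum_dlap_mul h (periodic_dlap h hF) hF
  have hsquare (i : ℕ) : linearPart h a b c F i * F i =
      (c - b ^ 2 / (4 * a)) * F i ^ 2 + a * (dlap h F i + b / (2 * a) * F i) ^ 2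
        + a * (dlap h (dlap h F) i * F i - dlap h F i * dlap h F i) := by
    simp only [linearPart]
    field_simp
    ring
  simp only [hsquare, Finset.sum_add_distrib, ← Finset.mul_sum, Finset.sum_sub_distrib, hbilap,
    sub_self, mul_zero, add_zero, le_add_iff_nonneg_right]
  positivity

lemma le_sum_schemeMap_mul_self (h : ℝ) {k a : ℝ} (hk : 0 ≤ k) (ha : 0 < a) (b c e : ℝ)
    (V : ℤ → ℝ) (hF : Function.Periodic F J) :
    (2 + k * (c - b ^ 2 / (4 * a))) * ∑ i ∈ Finset.range J, F i ^ 2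
        - 2 * ∑ i ∈ Finset.range J, V i * F i ≤
      ∑ i ∈ Finset.range J, schemeMap h k a b c e V F i * F i := by
  have hexpand : ∑ i ∈ Finset.range J, schemeMap h k a b c e V F i * F i =
      2 * ∑ i ∈ Finset.range J, F i ^ 2 - 2 * ∑ i ∈ Finset.range J, V i * F i
        + k * ∑ i ∈ Finset.range J, linearPart h a b c F i * F i
        - e * ∑ i ∈ Finset.range J, dphi F F i * F i := by
    simp only [Finset.mul_sum, ← Finset.sum_sub_distrib, ← Finset.sum_add_distrib, schemeMap]
    exact Finset.sum_congr rfl fun i _ => by ring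
  rw [hexpand, sum_dphi_self_mul_self hF]
  linarith [mul_le_mul_of_nonneg_left (le_sum_linearPart_mul_self h ha b c hF) hk]

variable [NeZero J]

lemma apply_val_intCast_of_periodic {M : Type*} {D : ℤ → M} (hD : Function.Periodic D J)
    (i : ℤ) : D ((i : ZMod J).val) = D i := by
  rw [ZMod.val_intCast, Int.emod_def, mul_comm]
  exact hD.sub_int_mul_eq _

lemma sum_zmod_val {M : Type*} [AddCommMonoid M] (f : ℕ → M) :
    ∑ j : ZMod J, f j.val = ∑ n ∈ Finset.range J, f n := by
  obtain ⟨n, rfl⟩ := Nat.exists_eq_succ_of_ne_zero (NeZero.ne J)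
  exact Fin.sum_univ_eq_sum_range f (n + 1)

theorem exists_periodic_schemeMap_eq_zero (h : ℝ) {k a b c : ℝ} (hk : 0 ≤ k) (ha : 0 < a)
    (hkabc : k * (b ^ 2 - 4 * a * c) < 8 * a) (e : ℝ) {V : ℤ → ℝ} (hV : Function.Periodic V J) :
    ∃ F : ℤ → ℝ, Function.Periodic F J ∧ ∀ i, schemeMap h k a b c e V F i = 0 := by
  let extend (x : EuclideanSpace ℝ (ZMod J)) (i : ℤ) : ℝ := x i
  let restrict (F : ℤ → ℝ) : EuclideanSpace ℝ (ZMod J) := WithLp.toLp 2 fun j => F j.val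
  have hextend (x) : Function.Periodic (extend x) J := fun i => by simp [extend]
  have inner_restrict (G : ℤ → ℝ) (x : EuclideanSpace ℝ (ZMod J)) :
      inner ℝ (restrict G) x = ∑ i ∈ Finset.range J, G i * extend x i := by
    rw [← sum_zmod_val]
    simp [restrict, extend, PiLp.inner_apply, mul_comm]
  have norm_sq (x : EuclideanSpace ℝ (ZMod J)) :
      ‖x‖ ^ 2 = ∑ i ∈ Finset.range J, extend x i ^ 2 := by
    rw [← sum_zmod_val]
    simp [extend, EuclideanSpace.real_norm_sq_eq]
  have hcont : Continuous fun x => restrict (schemeMap h k a b c e V (extend x)) := by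
    simp only [restrict, schemeMap, linearPart, dlap, dphi, extend]
    fun_prop
  have hκ : 0 < 2 + k * (c - b ^ 2 / (4 * a)) := by
    have : 2 + k * (c - b ^ 2 / (4 * a)) = (8 * a - k * (b ^ 2 - 4 * a * c)) / (4 * a) := by
      field_simp
      ring
    rw [this]
    exact div_pos (sub_pos.2 hkabc) (by positivity)
  obtain ⟨x, hx⟩ := exists_eq_zero_of_coercive (c := 2 * ‖restrict V‖) hcont hκ fun x => by
    have henergy := le_sum_schemeMap_mul_self h hk ha b c e V (hextend x)
    rw [← norm_sq, ← inner_restrict, ← inner_restrict] at henergy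
    linarith [real_inner_le_norm (restrict V) x]
  refine ⟨extend x, hextend x, fun i => ?_⟩
  rw [← apply_val_intCast_of_periodic (periodic_schemeMap h k a b c e hV (hextend x)) i]
  exact congrArg (fun y : EuclideanSpace ℝ (ZMod J) => y (i : ZMod J)) hx

end PeriodicSequences

lemma mul_sq_lt_of_lt_div_sq {k δ p R R_T : ℝ} (hδ : 0 < δ) (hp : 0 < p) (hk : 0 ≤ k)
    (hR : √(δ / p) < R) (hRT : R ≤ R_T) (hkRT : k < 8 * δ / (p - δ / R_T ^ 2) ^ 2) :
    k * (p - δ / R ^ 2) ^ 2 < 8 * δ := by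
  have hR0 : 0 < R := (Real.sqrt_nonneg _).trans_lt hR
  have hRp : δ / R ^ 2 < p := by
    rwa [Real.sqrt_lt' hR0, div_lt_comm₀ hp (by positivity)] at hR
  have hmono : δ / R_T ^ 2 ≤ δ / R ^ 2 := by gcongr
  have hsq : (p - δ / R ^ 2) ^ 2 ≤ (p - δ / R_T ^ 2) ^ 2 := by gcongr
  have hpos : 0 < (p - δ / R_T ^ 2) ^ 2 := pow_pos (by linarith) 2
  exact (mul_le_mul_of_nonneg_left hsq hk).trans_lt ((lt_div_iff₀ hpos).1 hkRT)

theorem stmt_12_general (J : ℕ) (hJ : 1 ≤ J) (h k v_c δ α R : ℝ) (_hh : h ≠ 0) (hk : 0 ≤ k)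
    (hδ : 0 < δ) (hR : R ≠ 0) (hkR : k * (α - 1 - δ / R ^ 2) ^ 2 < 8 * δ)
    (V : ℤ → ℝ) (hV : ∀ i : ℤ, V (i + J) = V i) :
    ∃ F : ℤ → ℝ, (∀ i : ℤ, F (i + J) = F i) ∧
      ∀ i : ℤ,
        2 * F i - 2 * V i
          + k * ((δ / R ^ 4) * dlap h (dlap h F) i
              + (1 / R ^ 2) * (α - 1 + δ / R ^ 2) * dlap h F i
              + ((α - 1) / R ^ 2) * F i)
          - (k * v_c / (6 * h)) * (1 / R ^ 2) * dphi F F i = 0 := by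
  have : NeZero J := ⟨Nat.one_le_iff_ne_zero.1 hJ⟩
  have hdiscrim : k * (((1 / R ^ 2) * (α - 1 + δ / R ^ 2)) ^ 2
      - 4 * (δ / R ^ 4) * ((α - 1) / R ^ 2)) = k * (α - 1 - δ / R ^ 2) ^ 2 / R ^ 4 := by
    field_simp
    ring
  refine exists_periodic_schemeMap_eq_zero h hk (by positivity) ?_ _ hV
  rw [hdiscrim, ← mul_div_assoc]
  gcongr

theorem stmt_12 (J : ℕ) (hJ : 1 ≤ J) (h k v_c δ α R R₀ R_T : ℝ)
    (hh : 0 < h) (hk : 0 < k) (hδ : 0 < δ) (hα : 1 < α)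
    (hR₀ : Real.sqrt (δ / (α - 1)) < R₀) (hRR₀ : R₀ ≤ R) (hRT : R ≤ R_T)
    (hksmall : k < 8 * δ / (α - 1 - δ / R_T ^ 2) ^ 2)
    (V : ℤ → ℝ) (hV : ∀ i : ℤ, V (i + J) = V i) :
    ∃ F : ℤ → ℝ, (∀ i : ℤ, F (i + J) = F i) ∧
      ∀ i : ℤ,
        2 * F i - 2 * V i
          + k * ((δ / R ^ 4) * dlap h (dlap h F) i
              + (1 / R ^ 2) * (α - 1 + δ / R ^ 2) * dlap h F i
              + ((α - 1) / R ^ 2) * F i)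
          - (k * v_c / (6 * h)) * (1 / R ^ 2) * dphi F F i = 0 := by
  have hR : √(δ / (α - 1)) < R := hR₀.trans_le hRR₀
  exact stmt_12_general J hJ h k v_c δ α R hh.ne' hk.le hδ ((Real.sqrt_nonneg _).trans_lt hR).ne'
    (mul_sq_lt_of_lt_div_sq hδ (sub_pos.2 hα) hk.le hR hRT hksmall) V hV
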